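/- With p₁ < p₂ and a = p₁p₂, b = p₁(1−p₂), c = (1−p₁)p₂, the stationary probability of state −1 in the priority-to-U₁ Markov chain is π_{−1} = (c−b)/(a+c), and consequently the throughput of the secondary user is τ₂ = p₂(1 − π_{−1}) = p₂(1 − (c−b)/(a+c)) = p₁. -/

import Mathlib

/-- With `p₁ < p₂`, the stationary probability of state `-1` of the priority-to-U₁
Markov chain is `π₋₁ = (c-b)/(a+c)`, and the throughput of the secondary user is
`τ₂ = p₂(1 - π₋₁) = p₁`. -/
theorem stmt13 (p₁ p₂ : ℝ) (hp₁ : 0 < p₁ ∧ p₁ < 1) (hp₂ : 0 < p₂ ∧ p₂ < 1)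
    (hlt : p₁ < p₂)
    (a b c d : ℝ) (ha : a = p₁ * p₂) (hb : b = p₁ * (1 - p₂))
    (hc : c = (1 - p₁) * p₂) (hd : d = (1 - p₁) * (1 - p₂))
    (πm1 : ℝ) (π π' : ℕ → ℝ)
    (hposm1 : 0 < πm1) (hpos : ∀ i, 0 < π i) (hpos' : ∀ i, 1 ≤ i → 0 < π' i)
    (heq1 : ∀ i, 1 ≤ i → (1 - a - d) * π i = b * (π (i - 1) + π' i) + a * π' (i + 1))
    (heq2 : ∀ i, 1 ≤ i → (1 - d) * π' i = c * (π i + π' (i + 1)))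
    (heq3 : (1 - c - d) * πm1 = c * (π 0 + π' 1))
    (heq4 : (1 - a - d) * π 0 = a * π' 1 + (a + b) * πm1)
    (hsum : Summable π) (hsum' : Summable fun i => π' (i + 1))
    (hnorm : πm1 + (∑' i, π i) + (∑' i, π' (i + 1)) = 1) :
    πm1 = (c - b) / (a + c) ∧ p₂ * (1 - πm1) = p₁ := by
  have hcut : ∀ i, b * π i = (a + c) * π' (i + 1) := by
    intro i
    induction i with
    | zero =>
      subst ha hb hc hd
      simp only [zero_add]
      linear_combination heq4 + heq3
    | succ k ih =>
      have h1 := heq1 (k + 1) (by omega)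
      have h2 := heq2 (k + 1) (by omega)
      simp only [Nat.add_sub_cancel] at h1
      subst ha hb hc hd
      linear_combination h1 + h2 + ih
  have hS : b * (∑' i, π i) = (a + c) * ∑' i, π' (i + 1) := by
    rw [← tsum_mul_left, ← tsum_mul_left]
    exact tsum_congr hcut
  have hs1 : Summable fun i => π (i + 1) := (summable_nat_add_iff 1).2 hsum
  have hs2 : Summable fun i => π' (i + 1 + 1) :=
    (summable_nat_add_iff (f := fun i => π' (i + 1)) 1).2 hsum'
  have e1 : (∑' i, π i) = π 0 + ∑' i, π (i + 1) := hsum.tsum_eq_zero_add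
  have e2 : (∑' i, π' (i + 1)) = π' 1 + ∑' i, π' (i + 1 + 1) := by
    simpa using hsum'.tsum_eq_zero_add
  have h2 : (1 - d) * (∑' i, π' (i + 1))
      = c * ((∑' i, π (i + 1)) + ∑' i, π' (i + 1 + 1)) := by
    rw [← hs1.tsum_add hs2, ← tsum_mul_left, ← tsum_mul_left]
    exact tsum_congr fun i => heq2 (i + 1) (by omega)
  generalize (∑' i, π i) = S at *
  generalize (∑' i, π' (i + 1)) = S' at *
  generalize (∑' i, π (i + 1)) = T at *
  generalize (∑' i, π' (i + 1 + 1)) = T' at *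
  obtain ⟨h1p, h1l⟩ := hp₁
  obtain ⟨h2p, h2l⟩ := hp₂
  have hc0 : 0 < c := by rw [hc]; exact mul_pos (by linarith) h2p
  have hcS : (c + p₁) * S = p₁ := by
    have hT : T = S - π 0 := by linarith
    have hT' : T' = S' - π' 1 := by linarith
    subst hT hT' ha hb hc hd
    linear_combination -heq3 - h2 + p₁ * hnorm
  have key : p₂ * (1 - πm1) = p₁ := by
    subst ha hb hc hd
    linear_combination hcS - hS - p₂ * hnorm
  refine ⟨?_, key⟩
  have hac : a + c = p₂ := by subst ha hc; ring
  rw [hac, eq_div_iff h2p.ne']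
  subst hb hc
  linarith
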